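/- Let λ, μ, ν ∈ P[n], let T be a λ-dominant set-valued tableau of shape μ with entries ≤ n and weight ν−λ, let (X_T, M_T) = Υ^{−1}(T), and let Y_T = (y_{i,j}) be the GT pattern in GT_Z(λ) with y_{i,j} = N_{n−i+j,n−i}, where N_{i,k} := λ_i + (number of occurrences of i in the top k rows of T). Then for every (i,j) ∈ M_T, the quantity SE_{n+1−j, i−j}(Y_T) = y_{n−j, i−j} − y_{n+1−j, i−j+1} equals the number of occurrences of i in the j-th row of T, and in particular is strictly positive; consequently, setting M'_T := {(n+1−j, i−j) : (i,j) ∈ M_T}, the pair (Y_T, M'_T) is a marked GT pattern in MGT_Z(λ). -/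

import Mathlib

/-!
Unfolding the indices, `SE_{n+1-j,i-j}(Y_T) = N_{i,j} - N_{i,j-1}`, which is the number of `i`'s in
row `j` of `T` by definition of `N`. A mark `(i,j) ∈ M` puts an `i` into row `j`, column
`x_{i-1,j}` of `T = Υ(x, M)`, so this number is positive (`rowOcc_pos_of_mark`).

In the same way the inequalities `SE ≥ 0` for `Y_T` are automatic, while `NE ≥ 0` reads
`N_{a+1,k+1} ≤ N_{a,k}`. This is where dominance enters (`Ndom_succ_le`): each row word of `T` is
weakly decreasing, so in row `k+1` all the letters `a+1` are read before any letter `a`; the prefix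
of `r(T_λ) * r(T)` ending just after the letters `≥ a+1` of row `k+1` contains `N_{a+1,k+1}` letters
`a+1` and `N_{a,k}` letters `a`.
-/

/-!
Common combinatorial definitions: partitions, (skew) set-valued tableaux,
contratableaux, reading words, dominance, Gelfand-Tsetlin patterns, and the
maps Υ and Ω.  Partitions are encoded as functions `ℕ → ℕ` whose parts are
`lam 1, lam 2, …` (with `lam 0 = 0` as a normalization).  Tableaux are encoded
as functions `ℕ → ℕ → Finset ℕ` assigning to each box (row, column), both
indexed from `1`, its (finite) set of entries, with value `∅` outside the
shape. -/

/-- `lam` is a partition with at most `n` nonzero parts `lam 1 ≥ lam 2 ≥ ⋯`. -/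
def IsPartition (n : ℕ) (lam : ℕ → ℕ) : Prop :=
  lam 0 = 0 ∧ (∀ i, 1 ≤ i → lam (i + 1) ≤ lam i) ∧ (∀ i, n < i → lam i = 0)

/-- `|lam|`, the sum of the parts of a partition in `P[n]`. -/
def sumParts (n : ℕ) (lam : ℕ → ℕ) : ℕ := ∑ i ∈ Finset.Icc 1 n, lam i

/-- The boxes of the skew Young diagram `lam/mu` (rows indexed from the top,
starting at `1`; columns from the left, starting at `1`). -/
def SkewBox (lam mu : ℕ → ℕ) (i j : ℕ) : Prop :=
  1 ≤ i ∧ mu i < j ∧ j ≤ lam i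

/-- The boxes of the straight Young diagram of `mu`. -/
def ShapeBox (mu : ℕ → ℕ) (i j : ℕ) : Prop :=
  1 ≤ i ∧ 1 ≤ j ∧ j ≤ mu i

/-- A semi-standard set-valued tableau with entries in `[n] = {1, …, n}` on a
given set `box` of boxes (rows indexed from the top): every box carries a
nonempty subset of `[n]`, rows weakly increase from left to right, columns
strictly increase from top to bottom, and the filling vanishes off the shape. -/
def IsSSVT (n : ℕ) (box : ℕ → ℕ → Prop) (T : ℕ → ℕ → Finset ℕ) : Prop :=
  (∀ i j, box i j → (T i j).Nonempty) ∧
  (∀ i j, box i j → T i j ⊆ Finset.Icc 1 n) ∧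
  (∀ i j, ¬ box i j → T i j = ∅) ∧
  (∀ i j, box i j → box i (j + 1) → ∀ a ∈ T i j, ∀ b ∈ T i (j + 1), a ≤ b) ∧
  (∀ i j, box i j → box (i + 1) j → ∀ a ∈ T i j, ∀ b ∈ T (i + 1) j, a < b)

/-- The boxes of the rotated shape `C(lam)` (for `lam ∈ P[n]`): the `j`-th row
from the *bottom* (`1 ≤ j ≤ n`) consists of `lam j` right-justified boxes, in
columns `lam 1 - lam j + 1, …, lam 1`. -/
def ContraBox (n : ℕ) (lam : ℕ → ℕ) (j c : ℕ) : Prop :=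
  1 ≤ j ∧ j ≤ n ∧ lam 1 - lam j < c ∧ c ≤ lam 1

/-- A set-valued contratableau of shape `lam` with entries in `[n]`: a
semi-standard set-valued tableau of shape `C(lam)`.  Here `T j c` is the box in
the `j`-th row from the bottom and column `c`; "columns strictly increase from
top to bottom" says entries of row `j+1` (which lies above row `j`) are
strictly smaller than those below them in row `j`. -/
def IsSVCT (n : ℕ) (lam : ℕ → ℕ) (T : ℕ → ℕ → Finset ℕ) : Prop :=
  (∀ j c, ContraBox n lam j c → (T j c).Nonempty) ∧
  (∀ j c, ContraBox n lam j c → T j c ⊆ Finset.Icc 1 n) ∧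
  (∀ j c, ¬ ContraBox n lam j c → T j c = ∅) ∧
  (∀ j c, ContraBox n lam j c → ContraBox n lam j (c + 1) →
    ∀ a ∈ T j c, ∀ b ∈ T j (c + 1), a ≤ b) ∧
  (∀ j c, ContraBox n lam j c → ContraBox n lam (j + 1) c →
    ∀ a ∈ T (j + 1) c, ∀ b ∈ T j c, a < b)

/-- The entries of one cell, read in decreasing order. -/
def cellWord (S : Finset ℕ) : List ℕ := (S.sort (· ≤ ·)).reverse

/-- The row word: rows are read from top to bottom, each row from right to
left, the entries of each cell in decreasing order (reading over the rectangle
with `R` rows and `W` columns, which covers the shape; cells off the shape are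
empty and contribute nothing). -/
def rowWordRect (R W : ℕ) (T : ℕ → ℕ → Finset ℕ) : List ℕ :=
  ((List.range R).map (fun i =>
    (((List.range W).reverse).map (fun j => cellWord (T (i + 1) (j + 1)))).flatten)).flatten

/-- The column word: columns are read from rightmost to leftmost, each column
from top to bottom, the entries of each cell in decreasing order. -/
def colWordRect (R W : ℕ) (T : ℕ → ℕ → Finset ℕ) : List ℕ :=
  (((List.range W).reverse).map (fun j =>
    ((List.range R).map (fun i => cellWord (T (i + 1) (j + 1)))).flatten)).flatten

/-- The row word of a contratableau whose rows are indexed from the bottom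
(`1, …, n`): rows are read from top to bottom (i.e. row `n` first), each row
from right to left, cell entries in decreasing order. -/
def contraRowWord (n W : ℕ) (T : ℕ → ℕ → Finset ℕ) : List ℕ :=
  (((List.range n).reverse).map (fun j =>
    (((List.range W).reverse).map (fun c => cellWord (T (j + 1) (c + 1)))).flatten)).flatten

/-- A word is dominant if every prefix contains at least as many `i`'s as
`(i+1)`'s, for every `i ≥ 1`. -/
def Dominant (u : List ℕ) : Prop :=
  ∀ t i, 1 ≤ i → (u.take t).count (i + 1) ≤ (u.take t).count i

/-- The row word of the superstandard tableau `T_lam` of shape and weight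
`lam` (its `i`-th row consists of `lam i` many `i`'s), for `lam ∈ P[n]`. -/
def superWord (n : ℕ) (lam : ℕ → ℕ) : List ℕ :=
  ((List.range n).map (fun i => List.replicate (lam (i + 1)) (i + 1))).flatten

/-- A word `u` is `lam`-dominant if `r(T_lam) * u` is dominant. -/
def LamDominant (n : ℕ) (lam : ℕ → ℕ) (u : List ℕ) : Prop :=
  Dominant (superWord n lam ++ u)

/-- The number of occurrences of the entry `v` in row `r` of `T`
(columns `1, …, W`). -/
def rowOcc (W : ℕ) (T : ℕ → ℕ → Finset ℕ) (r v : ℕ) : ℕ :=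
  ∑ c ∈ Finset.Icc 1 W, if v ∈ T r c then 1 else 0

/-- The number of occurrences of the entry `v` in `T` (the `v`-th coordinate
of the weight `wt T`), rows `1, …, R` and columns `1, …, W`. -/
def wtT (R W : ℕ) (T : ℕ → ℕ → Finset ℕ) (v : ℕ) : ℕ :=
  ∑ r ∈ Finset.Icc 1 R, rowOcc W T r v

/-- The total number of entries `|T|` of a set-valued tableau. -/
def sizeT (R W : ℕ) (T : ℕ → ℕ → Finset ℕ) : ℕ :=
  ∑ r ∈ Finset.Icc 1 R, ∑ c ∈ Finset.Icc 1 W, (T r c).card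

/-- A Gelfand-Tsetlin pattern of size `n`: a triangular array of integers
`x i j` (`1 ≤ j ≤ i ≤ n`) with `NE_{i,j} = x i j - x (i-1) j ≥ 0` and
`SE_{i,j} = x (i-1) j - x i (j+1) ≥ 0` for all `1 ≤ j < i ≤ n`, normalized to
vanish outside the triangle. -/
def IsGT (n : ℕ) (x : ℕ → ℕ → ℤ) : Prop :=
  (∀ i j, 1 ≤ j → j < i → i ≤ n → x (i - 1) j ≤ x i j ∧ x i (j + 1) ≤ x (i - 1) j) ∧
  (∀ i j, ¬ (1 ≤ j ∧ j ≤ i ∧ i ≤ n) → x i j = 0)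

/-- A GT pattern in `GT_ℤ(lam)`: bottom row equal to `lam`. -/
def IsGTZ (n : ℕ) (lam : ℕ → ℕ) (x : ℕ → ℕ → ℤ) : Prop :=
  IsGT n x ∧ ∀ j, 1 ≤ j → j ≤ n → x n j = (lam j : ℤ)

/-- A valid set of marks on a GT pattern: `M ⊆ {(i,j) : 1 ≤ j < i ≤ n` and
`SE_{i,j}(x) > 0}`. -/
def MarksOK (n : ℕ) (x : ℕ → ℕ → ℤ) (M : Finset (ℕ × ℕ)) : Prop :=
  ∀ p ∈ M, 1 ≤ p.2 ∧ p.2 < p.1 ∧ p.1 ≤ n ∧ 0 < x (p.1 - 1) p.2 - x p.1 (p.2 + 1)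

/-- A marked GT pattern in `MGT_ℤ(lam)`. -/
def IsMGTZ (n : ℕ) (lam : ℕ → ℕ) (x : ℕ → ℕ → ℤ) (M : Finset (ℕ × ℕ)) : Prop :=
  IsGTZ n lam x ∧ MarksOK n x M

/-- The map `Υ` from marked GT patterns to set-valued tableaux, in closed form:
the entry `i` lies in the box in row `r`, column `c` iff `x_{i-1,r} < c ≤ x_{i,r}`
(the horizontal strip `x^{(i)}/x^{(i-1)}` is filled with `i`'s), or `(i,r) ∈ M`
and `c = x_{i-1,r}` (for a mark, `i` is added to the rightmost box of row `r`
of `X^{(i-1)}`, the box containing `i-1` there). -/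
def Upsilon (n : ℕ) (x : ℕ → ℕ → ℤ) (M : Finset (ℕ × ℕ)) : ℕ → ℕ → Finset ℕ :=
  fun r c => (Finset.Icc 1 n).filter (fun i =>
    (x (i - 1) r < (c : ℤ) ∧ (c : ℤ) ≤ x i r) ∨ ((i, r) ∈ M ∧ (c : ℤ) = x (i - 1) r))

/-- The map `Ω` from marked GT patterns to set-valued contratableaux of shape
`lam`, in closed form.  Rows are indexed from the bottom and the box in row `j`
and column `c` is the `d`-th box from the right where `d = lam 1 + 1 - c`.
The entry `v = n + 1 - i` lies there iff `y_{i-1,j} < d ≤ y_{i,j}` (the boxes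
of `C(y^{(i)})/C(y^{(i-1)})` are filled with `n+1-i`), or `(i,j) ∈ M` and
`d = y_{i-1,j}` (for a mark, `n+1-i` is added to the leftmost box of row `j`
of `Y^{(i-1)}`, the box containing `n+2-i` there). -/
def Omega (n : ℕ) (lam : ℕ → ℕ) (y : ℕ → ℕ → ℤ) (M : Finset (ℕ × ℕ)) : ℕ → ℕ → Finset ℕ :=
  fun j c => (Finset.Icc 1 n).filter (fun v =>
    (y (n - v) j < (lam 1 : ℤ) + 1 - (c : ℤ) ∧ (lam 1 : ℤ) + 1 - (c : ℤ) ≤ y (n + 1 - v) j) ∨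
      ((n + 1 - v, j) ∈ M ∧ (lam 1 : ℤ) + 1 - (c : ℤ) = y (n - v) j))

/-- `N_{i,k} = lam i + (number of occurrences of i in the top k rows of T)`. -/
def Ndom (W : ℕ) (lam : ℕ → ℕ) (T : ℕ → ℕ → Finset ℕ) (i k : ℕ) : ℕ :=
  lam i + ∑ r ∈ Finset.Icc 1 k, rowOcc W T r i

/-- `N↑_{i,k} = mu i + (number of occurrences of i in rows k, k+1, …, n from
the bottom of a contratableau)`. -/
def Nup (n W : ℕ) (mu : ℕ → ℕ) (T : ℕ → ℕ → Finset ℕ) (i k : ℕ) : ℕ :=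
  mu i + ∑ r ∈ Finset.Icc k n, rowOcc W T r i

/-- The GT pattern `Y_T` with entries `y_{i,j} = N_{n-i+j, n-i}` (normalized to
`0` outside the triangle). -/
def Ypat (n W : ℕ) (lam : ℕ → ℕ) (T : ℕ → ℕ → Finset ℕ) : ℕ → ℕ → ℤ :=
  fun i j => if 1 ≤ j ∧ j ≤ i ∧ i ≤ n then (Ndom W lam T (n - i + j) (n - i) : ℤ) else 0

/-- The transported mark set `M' = {(n+1-j, i-j) : (i,j) ∈ M}`. -/
def MarksOf (n : ℕ) (M : Finset (ℕ × ℕ)) : Finset (ℕ × ℕ) :=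
  M.image (fun p => (n + 1 - p.2, p.1 - p.2))

/-- The stable Grothendieck polynomial `G_lam(x_1, …, x_n)`, a polynomial in
variables `X 1, …, X n`. -/
noncomputable def Groth (n : ℕ) (lam : ℕ → ℕ) : MvPolynomial ℕ ℤ :=
  ∑ᶠ T ∈ {T : ℕ → ℕ → Finset ℕ | IsSSVT n (ShapeBox lam) T},
    (-1 : MvPolynomial ℕ ℤ) ^ (sizeT n (lam 1) T - sumParts n lam) *
      ∏ k ∈ Finset.Icc 1 n, MvPolynomial.X k ^ wtT n (lam 1) T k

/-! ### Words and their letter counts -/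

/-- The word of row `i + 1` of `T`, read from right to left over columns `W, …, 1`. -/
def rowWord (W : ℕ) (T : ℕ → ℕ → Finset ℕ) (i : ℕ) : List ℕ :=
  (((List.range W).reverse).map (fun j => cellWord (T (i + 1) (j + 1)))).flatten

lemma count_cellWord (S : Finset ℕ) (v : ℕ) :
    (cellWord S).count v = if v ∈ S then 1 else 0 := by
  unfold cellWord
  rw [List.count_reverse, (S.sort_nodup (· ≤ ·)).count]
  simp

lemma count_rowWord (W : ℕ) (T : ℕ → ℕ → Finset ℕ) (i v : ℕ) :
    (rowWord W T i).count v = rowOcc W T (i + 1) v := by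
  unfold rowWord rowOcc
  induction W with
  | zero => simp
  | succ W ih =>
    rw [Finset.sum_Icc_succ_top (by omega), ← ih]
    simp [List.range_succ, count_cellWord, add_comm]

/-- The number of `v`'s in the word of the top `k` rows. -/
lemma count_rowWordRect (k W : ℕ) (T : ℕ → ℕ → Finset ℕ) (v : ℕ) :
    (rowWordRect k W T).count v = ∑ r ∈ Finset.Icc 1 k, rowOcc W T r v := by
  induction k with
  | zero => simp [rowWordRect]
  | succ k ih =>
    rw [Finset.sum_Icc_succ_top (by omega), ← ih, ← count_rowWord]
    simp [rowWordRect, rowWord, List.range_succ]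

lemma count_superWord (n : ℕ) (lam : ℕ → ℕ) (v : ℕ) (hv : 1 ≤ v) :
    (superWord n lam).count v = if v ≤ n then lam v else 0 := by
  induction n with
  | zero => simp [superWord]; omega
  | succ n ih =>
    have h : superWord (n + 1) lam = superWord n lam ++ List.replicate (lam (n + 1)) (n + 1) := by
      simp [superWord, List.range_succ]
    rw [h, List.count_append, ih, List.count_replicate]
    rcases lt_trichotomy v (n + 1) with h | h | h
    · simp [show v ≤ n by omega, show v ≤ n + 1 by omega, show ¬ n + 1 = v by omega]
    · subst h; simp
    · simp [show ¬ v ≤ n by omega, show ¬ v ≤ n + 1 by omega, show ¬ n + 1 = v by omega]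

/-- The word of the top `k + 1` rows is a prefix of the full row word. -/
lemma rowWordRect_split (n k W : ℕ) (hk : k < n) (T : ℕ → ℕ → Finset ℕ) :
    ∃ D, rowWordRect n W T = rowWordRect k W T ++ rowWord W T k ++ D := by
  obtain ⟨m, rfl⟩ : ∃ m, n = (k + 1) + m := ⟨n - (k + 1), by omega⟩
  refine ⟨((List.range m).map (fun i => rowWord W T (k + 1 + i))).flatten, ?_⟩
  simp [rowWordRect, rowWord, List.range_add, Function.comp_def]

/-! ### Rows are read in weakly decreasing order -/

/-- Rows of a set-valued tableau weakly increase between any two columns, adjacent or not; the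
nonemptiness of the boxes in between makes the adjacent relations chain. -/
lemma row_le {n : ℕ} {mu : ℕ → ℕ} {T : ℕ → ℕ → Finset ℕ} (hT : IsSSVT n (ShapeBox mu) T)
    (r c d : ℕ) (hcd : c < d) : ∀ a ∈ T r c, ∀ b ∈ T r d, a ≤ b := by
  obtain ⟨hne, -, hoff, hrow, -⟩ := hT
  have hbox : ∀ {r c a}, a ∈ T r c → ShapeBox mu r c := by
    intro r c a ha
    by_contra h
    simp [hoff r c h] at ha
  induction d, hcd using Nat.le_induction with
  | base => intro a ha b hb; exact hrow r c (hbox ha) (hbox hb) a ha b hb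
  | succ d hcd ih =>
    intro a ha b hb
    have h1 := hbox ha
    have h2 := hbox hb
    have h3 : ShapeBox mu r d := ⟨h1.1, by have := h1.2.1; omega, by have := h2.2.2; omega⟩
    obtain ⟨e, he⟩ := hne r d h3
    exact (ih a ha e he).trans (hrow r d h3 h2 e he b hb)

lemma rowWord_sorted {n : ℕ} {mu : ℕ → ℕ} {T : ℕ → ℕ → Finset ℕ}
    (hT : IsSSVT n (ShapeBox mu) T) (W i : ℕ) :
    (rowWord W T i).Pairwise (· ≥ ·) := by
  unfold rowWord
  rw [List.pairwise_flatten]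
  constructor
  · intro l hl
    obtain ⟨j, -, rfl⟩ := List.mem_map.1 hl
    unfold cellWord
    rw [List.pairwise_reverse]
    exact Finset.pairwise_sort _ _
  · rw [List.pairwise_map, List.pairwise_reverse]
    refine List.pairwise_lt_range.imp ?_
    intro c d hcd a ha b hb
    simp only [cellWord, List.mem_reverse, Finset.mem_sort] at ha hb
    exact row_le hT (i + 1) (c + 1) (d + 1) (by omega) b hb a ha

/-- A weakly decreasing word splits into a prefix containing all letters `a + 1` and no `a`,
and a rest. -/
lemma exists_split (a : ℕ) (B : List ℕ) (hB : B.Pairwise (· ≥ ·)) :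
    ∃ P Q, B = P ++ Q ∧ P.count (a + 1) = B.count (a + 1) ∧ P.count a = 0 := by
  induction B with
  | nil => exact ⟨[], [], by simp⟩
  | cons b B ih =>
    rw [List.pairwise_cons] at hB
    by_cases hb : a + 1 ≤ b
    · obtain ⟨P, Q, h, h1, h2⟩ := ih hB.2
      refine ⟨b :: P, Q, by simp [h], by simp [List.count_cons, h1], ?_⟩
      rw [List.count_cons, h2]
      simp; omega
    · refine ⟨[], b :: B, by simp, ?_, by simp⟩
      rw [List.count_nil, eq_comm, List.count_eq_zero]
      intro hm
      rcases List.mem_cons.1 hm with h | h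
      · omega
      · have := hB.1 _ h; omega

/-- Dominance yields `N_{a+1,k+1} ≤ N_{a,k}`, the inequality `NE ≥ 0` for `Y_T`. -/
lemma Ndom_succ_le {n : ℕ} {lam mu : ℕ → ℕ} {T : ℕ → ℕ → Finset ℕ}
    (hT : IsSSVT n (ShapeBox mu) T) (W : ℕ)
    (hdom : LamDominant n lam (rowWordRect n W T))
    (a k : ℕ) (ha : 1 ≤ a) (han : a + 1 ≤ n) (hk : k < n) :
    Ndom W lam T (a + 1) (k + 1) ≤ Ndom W lam T a k := by
  obtain ⟨D, hD⟩ := rowWordRect_split n k W hk T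
  obtain ⟨P, Q, hPQ, hP1, hP0⟩ := exists_split a _ (rowWord_sorted hT W k)
  have h := hdom (superWord n lam ++ rowWordRect k W T ++ P).length a ha
  have hw : superWord n lam ++ rowWordRect n W T
      = (superWord n lam ++ rowWordRect k W T ++ P) ++ (Q ++ D) := by
    rw [hD, hPQ]; simp
  rw [hw, List.take_left' rfl] at h
  simp only [List.count_append, hP1, hP0, count_rowWord, count_rowWordRect,
    count_superWord n lam _ ha, count_superWord n lam (a + 1) (by omega), han,
    show a ≤ n by omega, if_true] at h
  unfold Ndom
  rw [Finset.sum_Icc_succ_top (by omega)]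
  omega

/-! ### Marks and positivity -/

/-- Entries of a pattern in `GT_ℤ(mu)` are non-negative: follow the `SE` inequalities down to the
bottom row. -/
lemma gt_nonneg {n : ℕ} {mu : ℕ → ℕ} {x : ℕ → ℕ → ℤ} (hx : IsGTZ n mu x) (i j : ℕ) :
    0 ≤ x i j := by
  by_cases hb : 1 ≤ j ∧ j ≤ i ∧ i ≤ n
  · obtain ⟨m, hm⟩ : ∃ m, n = i + m := ⟨n - i, by omega⟩
    induction m generalizing i j with
    | zero =>
      obtain rfl : n = i := by omega
      rw [hx.2 j hb.1 hb.2.1]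
      positivity
    | succ m ih =>
      have h1 := (hx.1.1 (i + 1) j hb.1 (by omega) (by omega)).2
      have h2 := ih (i + 1) (j + 1) (by omega) (by omega)
      simp only [Nat.add_sub_cancel] at h1
      omega
  · exact (hx.1.2 i j hb).ge

lemma partition_le_one {n : ℕ} {mu : ℕ → ℕ} (hmu : IsPartition n mu) (i : ℕ) (hi : 1 ≤ i) :
    mu i ≤ mu 1 := by
  induction i, hi using Nat.le_induction with
  | base => exact le_rfl
  | succ i hi ih => exact (hmu.2.1 i hi).trans ih

/-- A mark `(i,j)` places an `i` in row `j` of the tableau. -/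
lemma rowOcc_pos_of_mark {n : ℕ} {mu : ℕ → ℕ} (hmu : IsPartition n mu)
    {T : ℕ → ℕ → Finset ℕ} (hT : IsSSVT n (ShapeBox mu) T)
    {x : ℕ → ℕ → ℤ} {M : Finset (ℕ × ℕ)} (hxM : IsMGTZ n mu x M) (hUps : Upsilon n x M = T)
    {p : ℕ × ℕ} (hp : p ∈ M) : 0 < rowOcc (mu 1) T p.2 p.1 := by
  obtain ⟨h1, h2, h3, -⟩ := hxM.2 p hp
  have hmem : p.1 ∈ T p.2 (x (p.1 - 1) p.2).toNat := by
    rw [← hUps]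
    simp only [Upsilon, Finset.mem_filter, Finset.mem_Icc]
    exact ⟨by omega, Or.inr ⟨hp, Int.toNat_of_nonneg (gt_nonneg hxM.1 _ _)⟩⟩
  -- The marked column is nonzero because `T` is empty off its shape.
  have hbox : ShapeBox mu p.2 (x (p.1 - 1) p.2).toNat := by
    by_contra h
    simp [hT.2.2.1 _ _ h] at hmem
  refine Finset.sum_pos' (fun _ _ => by positivity) ⟨_, Finset.mem_Icc.2
    ⟨hbox.2.1, hbox.2.2.trans (partition_le_one hmu _ h1)⟩, ?_⟩
  simp [hmem]

/-! ### The pattern `Y_T` -/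

lemma Ypat_eq {n : ℕ} (W : ℕ) (lam : ℕ → ℕ) (T : ℕ → ℕ → Finset ℕ) {i j a k : ℕ}
    (h1 : 1 ≤ j) (h2 : j ≤ i) (h3 : i ≤ n) (hk : n - i = k) (ha : k + j = a) :
    Ypat n W lam T i j = (Ndom W lam T a k : ℤ) := by
  subst hk ha
  simp [Ypat, h1, h2, h3]

/-- `SE_{i,j}(Y_T)` is a row count of `T`, for every position of the triangle. -/
lemma Ypat_SE {n : ℕ} (W : ℕ) (lam : ℕ → ℕ) (T : ℕ → ℕ → Finset ℕ) {i j : ℕ}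
    (h1 : 1 ≤ j) (h2 : j < i) (h3 : i ≤ n) :
    Ypat n W lam T (i - 1) j - Ypat n W lam T i (j + 1)
      = (rowOcc W T (n - i + 1) (n - i + 1 + j) : ℤ) := by
  rw [Ypat_eq W lam T (a := n - i + 1 + j) (k := n - i + 1) h1 (by omega) (by omega) (by omega) rfl,
    Ypat_eq W lam T (a := n - i + 1 + j) (k := n - i) (by omega) (by omega) h3 rfl (by omega)]
  unfold Ndom
  rw [Finset.sum_Icc_succ_top (by omega)]
  push_cast
  ring

/-- Let `lam, mu, nu ∈ P[n]`, let `T` be a `lam`-dominant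
set-valued tableau of shape `mu` with entries `≤ n` and weight `nu - lam`,
let `(x, M) = Υ⁻¹(T)` and let `Y_T` be the GT pattern with
`y_{i,j} = N_{n-i+j,n-i}`.  Then for every `(i,j) ∈ M` the quantity
`SE_{n+1-j,i-j}(Y_T) = y_{n-j,i-j} - y_{n+1-j,i-j+1}` equals the number of
occurrences of `i` in the `j`-th row of `T`, in particular it is strictly
positive; consequently, with `M' = {(n+1-j,i-j) : (i,j) ∈ M}`, the pair
`(Y_T, M')` is a marked GT pattern in `MGT_ℤ(lam)`. -/
theorem Ypat_marks (n : ℕ) (hn : 0 < n) (lam mu nu : ℕ → ℕ)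
    (hlam : IsPartition n lam) (hmu : IsPartition n mu) (hnu : IsPartition n nu)
    (T : ℕ → ℕ → Finset ℕ)
    (hT : IsSSVT n (ShapeBox mu) T)
    (hdom : LamDominant n lam (rowWordRect n (mu 1) T))
    (hwt : ∀ i, 1 ≤ i → i ≤ n → lam i + wtT n (mu 1) T i = nu i)
    (x : ℕ → ℕ → ℤ) (M : Finset (ℕ × ℕ))
    (hxM : IsMGTZ n mu x M) (hUps : Upsilon n x M = T) :
    (∀ p ∈ M,
      Ypat n (mu 1) lam T (n - p.2) (p.1 - p.2) -
          Ypat n (mu 1) lam T (n + 1 - p.2) (p.1 - p.2 + 1) =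
        (rowOcc (mu 1) T p.2 p.1 : ℤ) ∧
      0 < Ypat n (mu 1) lam T (n - p.2) (p.1 - p.2) -
          Ypat n (mu 1) lam T (n + 1 - p.2) (p.1 - p.2 + 1)) ∧
    IsMGTZ n lam (Ypat n (mu 1) lam T) (MarksOf n M) := by
  have hSE : ∀ p ∈ M, Ypat n (mu 1) lam T (n - p.2) (p.1 - p.2) -
      Ypat n (mu 1) lam T (n + 1 - p.2) (p.1 - p.2 + 1) = (rowOcc (mu 1) T p.2 p.1 : ℤ) := by
    intro p hp
    obtain ⟨h1, h2, h3, -⟩ := hxM.2 p hp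
    have h := Ypat_SE (mu 1) lam T (n := n) (i := n + 1 - p.2) (j := p.1 - p.2)
      (by omega) (by omega) (by omega)
    rw [show n + 1 - p.2 - 1 = n - p.2 by omega, show n - (n + 1 - p.2) + 1 = p.2 by omega,
      show p.2 + (p.1 - p.2) = p.1 by omega] at h
    exact h
  have hpos : ∀ p ∈ M, 0 < Ypat n (mu 1) lam T (n - p.2) (p.1 - p.2) -
      Ypat n (mu 1) lam T (n + 1 - p.2) (p.1 - p.2 + 1) := by
    intro p hp
    rw [hSE p hp]
    exact_mod_cast rowOcc_pos_of_mark hmu hT hxM hUps hp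
  refine ⟨fun p hp => ⟨hSE p hp, hpos p hp⟩, ⟨⟨?_, ?_⟩, ?_⟩, ?_⟩
  · intro i j h1 h2 h3
    constructor
    · rw [Ypat_eq (mu 1) lam T (a := n - i + j + 1) (k := n - i + 1) h1 (by omega) (by omega)
        (by omega) (by omega), Ypat_eq (mu 1) lam T h1 h2.le h3 rfl rfl]
      exact_mod_cast Ndom_succ_le hT (mu 1) hdom (n - i + j) (n - i)
        (by omega) (by omega) (by omega)
    · have h := Ypat_SE (mu 1) lam T h1 h2 h3
      omega
  · intro i j h
    simp only [Ypat, if_neg h]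
  · intro j h1 h2
    rw [Ypat_eq (mu 1) lam T (a := j) (k := 0) h1 h2 le_rfl (by omega) (by omega)]
    simp [Ndom]
  · intro q hq
    obtain ⟨p, hp, rfl⟩ := Finset.mem_image.1 hq
    obtain ⟨h1, h2, h3, -⟩ := hxM.2 p hp
    have h := hpos p hp
    refine ⟨by simp only; omega, by simp only; omega, by simp only; omega, ?_⟩
    simp only
    rw [show n + 1 - p.2 - 1 = n - p.2 by omega]
    exact h
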